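/- arXiv:math/0305371 — 2 statements merged into one kernel-verified Lean document; each statement's English description precedes it below -/
import Mathlib

section
/- Let (E,φ) be a product system of graphs over a semigroup P with identity e. For p ∈ P let X(E_p) be the set of functions x : E¹_p → ℂ such that v ↦ ∑_{λ∈E¹_p, r(λ)=v} |x(λ)|² vanishes at infinity on E⁰ (tends to 0 along the cofinite filter), with C₀(E⁰)-valued inner product ⟨x,y⟩(v) := ∑_{λ∈E¹_p, r(λ)=v} conj(x(λ)) y(λ). For x ∈ X(E_p) and y ∈ X(E_q) define xy : E¹_{pq} → ℂ by (xy)(γ) := x(γ(e,p)) y(γ(p,pq)). Then: (1) xy ∈ X(E_{pq}); (2) the multiplication is bilinear and associative, and δ_λ δ_μ = δ_{λμ} if r(λ) = s(μ) and δ_λ δ_μ = 0 otherwise, where δ_λ denotes the point mass at λ; (3) for all x,x' ∈ X(E_p), y,y' ∈ X(E_q) and v ∈ E⁰, ⟨xy, x'y'⟩(v) = ⟨⟨x',x⟩·y, y'⟩(v), where (a·y)(μ) := a(s(μ)) y(μ) for a function a on E⁰. -/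
open scoped Classical

noncomputable section

namespace PSG

variable {G : Type*} [Group G] {Λ : Type*}

/-- `g ≤ h` in the left-invariant partial order induced by the submonoid `P`. -/
def qle (P : Submonoid G) (g h : G) : Prop := g⁻¹ * h ∈ P

/-- `r` is a common upper bound of `p` and `q` in `P`. -/
def IsUB (P : Submonoid G) (p q r : G) : Prop := r ∈ P ∧ qle P p r ∧ qle P q r

/-- `r` is the least common upper bound of `p` and `q` in `P`. -/
def IsLUB2 (P : Submonoid G) (p q r : G) : Prop :=
  IsUB P p q r ∧ ∀ r', IsUB P p q r' → qle P r r'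

/-- `r` is the least upper bound in `P` of the set of degrees `D`. -/
def IsLUBFam (P : Submonoid G) (D : Set G) (r : G) : Prop :=
  r ∈ P ∧ (∀ p ∈ D, qle P p r) ∧ ∀ r' ∈ P, (∀ p ∈ D, qle P p r') → qle P r r'

/-- `(G, P)` is quasi-lattice ordered: `P ∩ P⁻¹ = {1}` and every pair of elements of `P`
with a common upper bound in `P` has a least upper bound in `P`. -/
def QuasiLatticeOrdered (P : Submonoid G) : Prop :=
  (∀ g ∈ P, g⁻¹ ∈ P → g = 1) ∧
    ∀ p ∈ P, ∀ q ∈ P, (∃ r, IsUB P p q r) → ∃ r, IsLUB2 P p q r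

/-- A product system of graphs over `P`, encoded on a single edge set `Λ` (which contains the
vertices as the elements of degree `1`), with degree map `d`, source and range maps `src`, `rng`
(valued in vertices), and partial multiplication `mul` (meaningful when `rng a = src b`). -/
structure IsProductSystem (P : Submonoid G) (d : Λ → G) (src rng : Λ → Λ)
    (mul : Λ → Λ → Λ) : Prop where
  countable : Countable Λ
  d_mem : ∀ a, d a ∈ P
  d_src : ∀ a, d (src a) = 1
  d_rng : ∀ a, d (rng a) = 1
  src_vertex : ∀ v, d v = 1 → src v = v
  rng_vertex : ∀ v, d v = 1 → rng v = v
  d_mul : ∀ a b, rng a = src b → d (mul a b) = d a * d b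
  src_mul : ∀ a b, rng a = src b → src (mul a b) = src a
  rng_mul : ∀ a b, rng a = src b → rng (mul a b) = rng b
  mul_assoc' : ∀ a b c, rng a = src b → rng b = src c →
    mul (mul a b) c = mul a (mul b c)
  src_mul_self : ∀ a, mul (src a) a = a
  mul_rng_self : ∀ a, mul a (rng a) = a
  factor : ∀ p q : G, p ∈ P → q ∈ P → ∀ c, d c = p * q →
    ∃! ab : Λ × Λ, d ab.1 = p ∧ d ab.2 = q ∧ rng ab.1 = src ab.2 ∧ mul ab.1 ab.2 = c

/-- `a` is an initial segment of `c`: `c = a • b` for some (necessarily unique) `b`. -/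
def IsInit (src rng : Λ → Λ) (mul : Λ → Λ → Λ) (a c : Λ) : Prop :=
  ∃ b, rng a = src b ∧ mul a b = c

/-- The set of minimal common extensions of `μ` and `ν`. -/
def MCE (P : Submonoid G) (d : Λ → G) (src rng : Λ → Λ) (mul : Λ → Λ → Λ)
    (μ ν : Λ) : Set Λ :=
  {γ | IsInit src rng mul μ γ ∧ IsInit src rng mul ν γ ∧ IsLUB2 P (d μ) (d ν) (d γ)}

/-- The product system is finitely aligned. -/
def FinitelyAligned (P : Submonoid G) (d : Λ → G) (src rng : Λ → Λ)
    (mul : Λ → Λ → Λ) : Prop :=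
  ∀ μ ν : Λ, (MCE P d src rng mul μ ν).Finite

/-- The set of minimal common extensions of a set `S` of edges. -/
def MCEset (P : Submonoid G) (d : Λ → G) (src rng : Λ → Λ) (mul : Λ → Λ → Λ)
    (S : Set Λ) : Set Λ :=
  {γ | (∀ α ∈ S, IsInit src rng mul α γ) ∧ IsLUBFam P (d '' S) (d γ)}

/-- `∨F`: the union of `MCE(S)` over the nonempty subsets `S ⊆ F`. -/
def vee (P : Submonoid G) (d : Λ → G) (src rng : Λ → Λ) (mul : Λ → Λ → Λ)
    (F : Finset Λ) : Set Λ :=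
  {γ | ∃ S : Finset Λ, S.Nonempty ∧ S ⊆ F ∧ γ ∈ MCEset P d src rng mul ↑S}

/-- Given that `a` is an initial segment of `c`, the (unique) complementary segment;
junk value `c` otherwise. -/
def tail (src rng : Λ → Λ) (mul : Λ → Λ → Λ) (a c : Λ) : Λ :=
  if h : IsInit src rng mul a c then h.choose else c

section CstarFamilies

variable (P : Submonoid G) (d : Λ → G) (src rng : Λ → Λ) (mul : Λ → Λ → Λ)
variable {B : Type*} [CStarAlgebra B] [PartialOrder B] [StarOrderedRing B]

/-- A Toeplitz `E`-family in a C*-algebra `B` (conditions (1)–(4)). -/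
structure IsToeplitzFamily (t : Λ → B) : Prop where
  vertex_sa : ∀ v, d v = 1 → IsSelfAdjoint (t v)
  vertex_idem : ∀ v, d v = 1 → t v * t v = t v
  vertex_orth : ∀ v w, d v = 1 → d w = 1 → v ≠ w → t v * t w = 0
  mul_eq : ∀ a b, rng a = src b → t a * t b = t (mul a b)
  star_mul_self : ∀ a, star (t a) * t a = t (rng a)
  dom : ∀ p : G, p ∈ P → p ≠ 1 → ∀ v, d v = 1 → ∀ F : Finset Λ,
    (∀ a ∈ F, d a = p ∧ src a = v) → (∑ a ∈ F, t a * star (t a)) ≤ t v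

/-- The Nica-covariance/Cuntz–Krieger relation (5):
`tμ* tν = ∑_{γ = μα = νβ ∈ MCE(μ,ν)} tα tβ*`. -/
def TCKrel (t : Λ → B) : Prop :=
  ∀ μ ν : Λ, ∀ M : Finset Λ, ↑M = MCE P d src rng mul μ ν →
    star (t μ) * t ν =
      ∑ γ ∈ M, t (tail src rng mul μ γ) * star (t (tail src rng mul ν γ))

/-- A Toeplitz–Cuntz–Krieger `E`-family: conditions (1)–(5). -/
def IsTCKFamily (t : Λ → B) : Prop :=
  IsToeplitzFamily P d src rng mul t ∧ TCKrel P d src rng mul t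

/-- Condition (†): for every finite `R ⊆ P∖{1}`, every vertex `v`, and all finite sets
`F_p ⊆ s_p⁻¹(v)` (`p ∈ R`), the product `∏_{p ∈ R} (t_v − ∑_{a ∈ F_p} t_a t_a*)` is nonzero.
(The factors commute, so the product is stated for an arbitrary enumeration of `R`.) -/
def Dagger (t : Λ → B) : Prop :=
  ∀ R : List G, R.Nodup → (∀ p ∈ R, p ∈ P ∧ p ≠ 1) →
    ∀ v, d v = 1 → ∀ Fp : G → Finset Λ,
      (∀ p ∈ R, ∀ a ∈ Fp p, d a = p ∧ src a = v) →
        (R.map fun p => t v - ∑ a ∈ Fp p, t a * star (t a)).prod ≠ 0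

/-- The projection `Q^{∨F}_l = t_l t_l* ∏_{l α ∈ ∨F, d α ≠ 1} (t_{s(l)} − t_{lα} t_{lα}*)`.
(The factors commute, so the product is computed over an arbitrary enumeration.) -/
def Qproj (t : Λ → B) (F : Finset Λ) (l : Λ) : B :=
  if h : {α : Λ | d α ≠ 1 ∧ rng l = src α ∧ mul l α ∈ vee P d src rng mul F}.Finite then
    t l * star (t l) *
      (h.toFinset.toList.map fun α =>
        t (src l) - t (mul l α) * star (t (mul l α))).prod
  else 0

end CstarFamilies

/-- The positive cone `ℕ^k` inside `ℤ^k` (written multiplicatively). -/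
def posCone (k : ℕ) : Submonoid (Multiplicative (Fin k → ℤ)) where
  carrier := {g | ∀ i, 0 ≤ Multiplicative.toAdd g i}
  mul_mem' := by
    intro a b ha hb i
    simpa using add_nonneg (ha i) (hb i)
  one_mem' := by
    intro i
    simp

/-- The `i`-th standard generator of `ℕ^k ⊆ ℤ^k`. -/
def egen (k : ℕ) (i : Fin k) : Multiplicative (Fin k → ℤ) :=
  Multiplicative.ofAdd (Pi.single i 1)

end PSG
namespace PSG

variable {G : Type*} [Group G] {Λ : Type*}

/-- Membership in the Cuntz–Krieger bimodule `X(E_p)`: functions supported on edges of degree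
`p` whose fibrewise ℓ²-norms are finite and vanish at infinity on the vertex set. -/
def CKmem (d : Λ → G) (rng : Λ → Λ) (p : G) (x : Λ → ℂ) : Prop :=
  (∀ a, x a ≠ 0 → d a = p) ∧
  (∀ v, d v = 1 →
    Summable fun a : {a : Λ // d a = p ∧ rng a = v} => ‖x a.1‖ ^ 2) ∧
  Filter.Tendsto (fun v : {v : Λ // d v = 1} =>
      ∑' a : {a : Λ // d a = p ∧ rng a = v.1}, ‖x a.1‖ ^ 2)
    Filter.cofinite (nhds 0)

/-- The initial factor `γ(e,p)` of degree `p` of an edge `γ` (junk value if none exists). -/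
def fac1 (d : Λ → G) (src rng : Λ → Λ) (mul : Λ → Λ → Λ) (p : G) (c : Λ) : Λ :=
  if h : ∃ ab : Λ × Λ, d ab.1 = p ∧ rng ab.1 = src ab.2 ∧ mul ab.1 ab.2 = c
  then h.choose.1 else c

/-- The final factor `γ(p, d(γ))` complementary to the initial factor of degree `p`. -/
def fac2 (d : Λ → G) (src rng : Λ → Λ) (mul : Λ → Λ → Λ) (p : G) (c : Λ) : Λ :=
  if h : ∃ ab : Λ × Λ, d ab.1 = p ∧ rng ab.1 = src ab.2 ∧ mul ab.1 ab.2 = c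
  then h.choose.2 else c

/-- The multiplication `X(E_p) × X(E_q) → X(E_{pq})`: `(xy)(γ) = x(γ(e,p)) y(γ(p,pq))`. -/
def ckmul (d : Λ → G) (src rng : Λ → Λ) (mul : Λ → Λ → Λ)
    (p q : G) (x y : Λ → ℂ) : Λ → ℂ :=
  fun c => if d c = p * q then
    x (fac1 d src rng mul p c) * y (fac2 d src rng mul p c) else 0

/-- The `C₀(E⁰)`-valued inner product on `X(E_p)`:
`⟨x,y⟩(v) = ∑_{d(a)=p, r(a)=v} conj (x a) * y a`. -/
def ckInner (d : Λ → G) (rng : Λ → Λ) (p : G) (x y : Λ → ℂ) : Λ → ℂ :=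
  fun v => ∑' a : {a : Λ // d a = p ∧ rng a = v}, (starRingEnd ℂ) (x a.1) * y a.1

/-!
By unique factorisation, `(λ, μ) ↦ λμ` identifies the pairs of composable edges of degrees `p` and
`q` with `r(μ) = v` with the edges of degree `pq` and range `v`, and under this identification
`xy` is `(λ, μ) ↦ x(λ) y(μ)`. Summing first over `λ`, whose range is `s(μ)`, gives
`⟨xy, x'y'⟩(v) = ∑ μ, ⟨x, x'⟩(s(μ)) conj(y(μ)) y'(μ)`. For `x = x'` and `y = y'` this bounds
`⟨xy, xy⟩` by a multiple of `⟨y, y⟩` as soon as `⟨x, x⟩` is bounded, so `xy` inherits vanishing at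
infinity from `y`.
-/

theorem summable_inner_of_summable_norm_sq {ι 𝕜 V : Type*} [RCLike 𝕜]
    [SeminormedAddCommGroup V] [InnerProductSpace 𝕜 V] {f g : ι → V}
    (hf : Summable fun i => ‖f i‖ ^ 2) (hg : Summable fun i => ‖g i‖ ^ 2) :
    Summable fun i => inner 𝕜 (f i) (g i) := by
  refine .of_norm_bounded (hf.add hg) fun i => ?_
  calc ‖inner 𝕜 (f i) (g i)‖ ≤ ‖f i‖ * ‖g i‖ := norm_inner_le_norm _ _
    _ ≤ 2 * ‖f i‖ * ‖g i‖ := by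
      rw [mul_assoc]
      exact le_mul_of_one_le_left (by positivity) one_le_two
    _ ≤ ‖f i‖ ^ 2 + ‖g i‖ ^ 2 := two_mul_le_add_sq _ _

/-- The fibre `r_p⁻¹(v)`: the edges of degree `p` with range `v`. -/
abbrev Fiber (d : Λ → G) (rng : Λ → Λ) (p : G) (v : Λ) : Type _ :=
  {a : Λ // d a = p ∧ rng a = v}

/-- The squared `ℓ²`-norm `⟨x, x⟩(v)` of the restriction of `x` to the fibre `r_p⁻¹(v)`, as a real
number; it is `0` if that restriction is not square-summable. -/
def fiberNormSq (d : Λ → G) (rng : Λ → Λ) (p : G) (x : Λ → ℂ) (v : Λ) : ℝ :=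
  ∑' a : Fiber d rng p v, ‖x a‖ ^ 2

/-- The fibrewise `ℓ²`-norms of `x` over the edges of degree `p` are finite and uniformly bounded.
This relaxes membership in `X(E_p)`, and ignores the values of `x` at edges of other degrees. -/
structure IsFiberBounded (d : Λ → G) (rng : Λ → Λ) (p : G) (x : Λ → ℂ) : Prop where
  summable : ∀ v, d v = 1 → Summable fun a : Fiber d rng p v => ‖x a‖ ^ 2
  exists_bound : ∃ M, ∀ v, d v = 1 → fiberNormSq d rng p x v ≤ M

section

variable {P : Submonoid G} {d : Λ → G} {src rng : Λ → Λ} {mul : Λ → Λ → Λ} {p q : G}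

theorem CKmem.isFiberBounded {x : Λ → ℂ} (hx : CKmem d rng p x) : IsFiberBounded d rng p x := by
  obtain ⟨-, hsum, hlim⟩ := hx
  obtain ⟨M, hM⟩ := hlim.bddAbove_range_of_cofinite
  exact ⟨hsum, M, fun v hv => hM ⟨⟨v, hv⟩, rfl⟩⟩

theorem ckmul_of_ne {c : Λ} (hc : d c ≠ p * q) (x y : Λ → ℂ) :
    ckmul d src rng mul p q x y c = 0 :=
  if_neg hc

theorem add_ckmul (x x' y : Λ → ℂ) :
    ckmul d src rng mul p q (x + x') y =
      ckmul d src rng mul p q x y + ckmul d src rng mul p q x' y := by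
  funext c
  simp only [ckmul, Pi.add_apply, add_mul]
  split_ifs <;> simp

theorem ckmul_add (x y y' : Λ → ℂ) :
    ckmul d src rng mul p q x (y + y') =
      ckmul d src rng mul p q x y + ckmul d src rng mul p q x y' := by
  funext c
  simp only [ckmul, Pi.add_apply, mul_add]
  split_ifs <;> simp

theorem smul_ckmul (k : ℂ) (x y : Λ → ℂ) :
    ckmul d src rng mul p q (k • x) y = k • ckmul d src rng mul p q x y := by
  funext c
  simp only [ckmul, Pi.smul_apply, smul_mul_assoc, smul_ite, smul_zero]

theorem ckmul_smul (k : ℂ) (x y : Λ → ℂ) :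
    ckmul d src rng mul p q x (k • y) = k • ckmul d src rng mul p q x y := by
  funext c
  simp only [ckmul, Pi.smul_apply, mul_smul_comm, smul_ite, smul_zero]

namespace IsProductSystem

theorem exists_mul_eq (hPS : IsProductSystem P d src rng mul) (hp : p ∈ P) (hq : q ∈ P) {c : Λ}
    (hc : d c = p * q) : ∃ a b, d a = p ∧ d b = q ∧ rng a = src b ∧ mul a b = c := by
  obtain ⟨⟨a, b⟩, hab, -⟩ := hPS.factor p q hp hq c hc
  exact ⟨a, b, hab⟩

theorem mul_eq_mul_iff (hPS : IsProductSystem P d src rng mul) {a b a' b' : Λ}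
    (h : rng a = src b) (h' : rng a' = src b') (hd : d a = d a') :
    mul a b = mul a' b' ↔ a = a' ∧ b = b' := by
  refine ⟨fun hm => ?_, fun ⟨ha, hb⟩ => by rw [ha, hb]⟩
  have hdb : d b = d b' := by
    have hdm := congrArg d hm
    rw [hPS.d_mul a b h, hPS.d_mul a' b' h', hd] at hdm
    exact mul_left_cancel hdm
  have huniq := (hPS.factor _ _ (hPS.d_mem a') (hPS.d_mem b') _ (hPS.d_mul a' b' h')).unique
    (y₁ := (a, b)) (y₂ := (a', b')) ⟨hd, hdb, h, hm⟩ ⟨rfl, rfl, h', rfl⟩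
  exact Prod.mk.inj huniq

theorem fac1_mul (hPS : IsProductSystem P d src rng mul) {a b : Λ} (h : rng a = src b) :
    fac1 d src rng mul (d a) (mul a b) = a := by
  have hex : ∃ ab : Λ × Λ, d ab.1 = d a ∧ rng ab.1 = src ab.2 ∧ mul ab.1 ab.2 = mul a b :=
    ⟨(a, b), rfl, h, rfl⟩
  obtain ⟨hd, hcomp, hmul⟩ := hex.choose_spec
  rw [fac1, dif_pos hex]
  exact ((hPS.mul_eq_mul_iff hcomp h hd).mp hmul).1

theorem fac2_mul (hPS : IsProductSystem P d src rng mul) {a b : Λ} (h : rng a = src b) :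
    fac2 d src rng mul (d a) (mul a b) = b := by
  have hex : ∃ ab : Λ × Λ, d ab.1 = d a ∧ rng ab.1 = src ab.2 ∧ mul ab.1 ab.2 = mul a b :=
    ⟨(a, b), rfl, h, rfl⟩
  obtain ⟨hd, hcomp, hmul⟩ := hex.choose_spec
  rw [fac2, dif_pos hex]
  exact ((hPS.mul_eq_mul_iff hcomp h hd).mp hmul).2

theorem ckmul_mul (hPS : IsProductSystem P d src rng mul) {a b : Λ} (ha : d a = p) (hb : d b = q)
    (h : rng a = src b) (x y : Λ → ℂ) :
    ckmul d src rng mul p q x y (mul a b) = x a * y b := by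
  subst ha hb
  rw [ckmul, if_pos (hPS.d_mul a b h), hPS.fac1_mul h, hPS.fac2_mul h]

theorem ckmul_assoc (hPS : IsProductSystem P d src rng mul) (hp : p ∈ P) (hq : q ∈ P) {r : G}
    (hr : r ∈ P) (x y z : Λ → ℂ) :
    ckmul d src rng mul (p * q) r (ckmul d src rng mul p q x y) z =
      ckmul d src rng mul p (q * r) x (ckmul d src rng mul q r y z) := by
  funext c
  by_cases hc : d c = p * q * r
  · obtain ⟨e, c, he, hdc, hec, rfl⟩ := hPS.exists_mul_eq (P.mul_mem hp hq) hr hc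
    obtain ⟨a, b, ha, hb, hab, rfl⟩ := hPS.exists_mul_eq hp hq he
    have hbc : rng b = src c := (hPS.rng_mul a b hab).symm.trans hec
    have hdbc : d (mul b c) = q * r := by rw [hPS.d_mul b c hbc, hb, hdc]
    have habc : rng a = src (mul b c) := hab.trans (hPS.src_mul b c hbc).symm
    calc _ = x a * y b * z c := by rw [hPS.ckmul_mul he hdc hec, hPS.ckmul_mul ha hb hab]
      _ = x a * (y b * z c) := mul_assoc _ _ _
      _ = _ := by
        rw [hPS.mul_assoc' a b c hab hbc, hPS.ckmul_mul ha hdbc habc, hPS.ckmul_mul hb hdc hbc]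
  · rw [ckmul_of_ne hc, ckmul_of_ne (by rwa [← mul_assoc])]

theorem ckmul_single (hPS : IsProductSystem P d src rng mul) (hp : p ∈ P) (hq : q ∈ P) {a b : Λ}
    (ha : d a = p) (hb : d b = q) (k l : ℂ) :
    ckmul d src rng mul p q (Pi.single a k) (Pi.single b l) =
      if rng a = src b then Pi.single (mul a b) (k * l) else 0 := by
  funext c
  by_cases hc : d c = p * q
  · obtain ⟨a', b', ha', hb', hcomp, rfl⟩ := hPS.exists_mul_eq hp hq hc
    rw [hPS.ckmul_mul ha' hb' hcomp]
    split_ifs with h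
    · simp only [Pi.single_apply, hPS.mul_eq_mul_iff hcomp h (ha'.trans ha.symm),
        and_comm (a := a' = a), ite_and, ite_mul, mul_ite, zero_mul, mul_zero]
    · have hne : ¬(a' = a ∧ b' = b) := by
        rintro ⟨rfl, rfl⟩
        exact h hcomp
      rcases not_and_or.mp hne with hne | hne <;> simp [hne]
  · rw [ckmul_of_ne hc]
    split_ifs with h
    · have hne : c ≠ mul a b := by
        rintro rfl
        exact hc (by rw [hPS.d_mul a b h, ha, hb])
      rw [Pi.single_eq_of_ne hne]
    · rfl

/-- The bijection `(μ, λ) ↦ λμ` from composable pairs of edges of degrees `p` and `q` ending at `v`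
to edges of degree `p * q` ending at `v`. The second factor `μ` is the base of the sigma type, so
that sums over the fibres of this type are inner products at the vertex `s(μ)`. -/
def fiberMulEquiv (hPS : IsProductSystem P d src rng mul) (hp : p ∈ P) (hq : q ∈ P) (v : Λ) :
    (Σ b : Fiber d rng q v, Fiber d rng p (src b)) ≃ Fiber d rng (p * q) v :=
  Equiv.ofBijective
    (fun s => ⟨mul s.2 s.1, by rw [hPS.d_mul _ _ s.2.2.2, s.2.2.1, s.1.2.1],
      by rw [hPS.rng_mul _ _ s.2.2.2, s.1.2.2]⟩) <| by
    constructor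
    · rintro ⟨⟨b, hb⟩, ⟨a, ha⟩⟩ ⟨⟨b', hb'⟩, ⟨a', ha'⟩⟩ h
      obtain ⟨rfl, rfl⟩ := (hPS.mul_eq_mul_iff ha.2 ha'.2 (ha.1.trans ha'.1.symm)).mp
        (congrArg Subtype.val h)
      rfl
    · rintro ⟨c, hc, hv⟩
      obtain ⟨a, b, ha, hb, h, rfl⟩ := hPS.exists_mul_eq hp hq hc
      exact ⟨⟨⟨b, hb, (hPS.rng_mul a b h).symm.trans hv⟩, ⟨a, ha, h⟩⟩, rfl⟩

theorem ckmul_fiberMulEquiv (hPS : IsProductSystem P d src rng mul) (hp : p ∈ P) (hq : q ∈ P)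
    (v : Λ) (x y : Λ → ℂ) (s : Σ b : Fiber d rng q v, Fiber d rng p (src b)) :
    ckmul d src rng mul p q x y (hPS.fiberMulEquiv hp hq v s) = x s.2 * y s.1 :=
  hPS.ckmul_mul s.2.2.1 s.1.2.1 s.2.2.2 x y

theorem fiberNormSq_src_mul_le (hPS : IsProductSystem P d src rng mul) {x : Λ → ℂ} {M : ℝ}
    (hM : ∀ v, d v = 1 → fiberNormSq d rng p x v ≤ M) (y : Λ → ℂ) (b : Λ) :
    fiberNormSq d rng p x (src b) * ‖y b‖ ^ 2 ≤ M * ‖y b‖ ^ 2 :=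
  mul_le_mul_of_nonneg_right (hM _ (hPS.d_src b)) (sq_nonneg _)

theorem summable_fiberNormSq_src_mul (hPS : IsProductSystem P d src rng mul) {x y : Λ → ℂ} {v : Λ}
    (hx : IsFiberBounded d rng p x) (hy : Summable fun b : Fiber d rng q v => ‖y b‖ ^ 2) :
    Summable fun b : Fiber d rng q v => fiberNormSq d rng p x (src b) * ‖y b‖ ^ 2 := by
  obtain ⟨M, hM⟩ := hx.exists_bound
  exact .of_nonneg_of_le (fun _ => mul_nonneg (tsum_nonneg fun _ => sq_nonneg _) (sq_nonneg _))
    (fun b => hPS.fiberNormSq_src_mul_le hM y b) (hy.mul_left M)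

theorem hasSum_norm_sq_ckmul (hPS : IsProductSystem P d src rng mul) (hp : p ∈ P) (hq : q ∈ P)
    {x y : Λ → ℂ} {v : Λ} (hx : IsFiberBounded d rng p x)
    (hy : Summable fun b : Fiber d rng q v => ‖y b‖ ^ 2) :
    HasSum (fun c : Fiber d rng (p * q) v => ‖ckmul d src rng mul p q x y c‖ ^ 2)
      (∑' b : Fiber d rng q v, fiberNormSq d rng p x (src b) * ‖y b‖ ^ 2) := by
  have hfiber (b : Fiber d rng q v) :
      HasSum (fun a : Fiber d rng p (src b) => ‖x a‖ ^ 2 * ‖y b‖ ^ 2)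
        (fiberNormSq d rng p x (src b) * ‖y b‖ ^ 2) :=
    (hx.summable _ (hPS.d_src b)).hasSum.mul_right _
  have hbase := hPS.summable_fiberNormSq_src_mul hx hy
  have hpairs : Summable fun s : Σ b : Fiber d rng q v, Fiber d rng p (src b) =>
      ‖x s.2‖ ^ 2 * ‖y s.1‖ ^ 2 :=
    (summable_sigma_of_nonneg fun _ => by positivity).mpr
      ⟨fun b => (hfiber b).summable, hbase.congr fun b => (hfiber b).tsum_eq.symm⟩
  rw [← (hPS.fiberMulEquiv hp hq v).hasSum_iff]
  simp only [Function.comp_def, hPS.ckmul_fiberMulEquiv, norm_mul, mul_pow]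
  exact .sigma_of_hasSum hbase.hasSum hfiber hpairs

theorem fiberNormSq_ckmul_le (hPS : IsProductSystem P d src rng mul) (hp : p ∈ P) (hq : q ∈ P)
    {x y : Λ → ℂ} {v : Λ} {M : ℝ} (hx : IsFiberBounded d rng p x)
    (hM : ∀ w, d w = 1 → fiberNormSq d rng p x w ≤ M)
    (hy : Summable fun b : Fiber d rng q v => ‖y b‖ ^ 2) :
    fiberNormSq d rng (p * q) (ckmul d src rng mul p q x y) v ≤ M * fiberNormSq d rng q y v :=
  calc fiberNormSq d rng (p * q) (ckmul d src rng mul p q x y) v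
      = ∑' b : Fiber d rng q v, fiberNormSq d rng p x (src b) * ‖y b‖ ^ 2 :=
        (hPS.hasSum_norm_sq_ckmul hp hq hx hy).tsum_eq
    _ ≤ ∑' b : Fiber d rng q v, M * ‖y b‖ ^ 2 :=
        (hPS.summable_fiberNormSq_src_mul hx hy).tsum_le_tsum
          (fun b => hPS.fiberNormSq_src_mul_le hM y b) (hy.mul_left M)
    _ = M * fiberNormSq d rng q y v := tsum_mul_left

theorem ckmem_ckmul (hPS : IsProductSystem P d src rng mul) (hp : p ∈ P) (hq : q ∈ P)
    {x y : Λ → ℂ} (hx : IsFiberBounded d rng p x) (hy : CKmem d rng q y) :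
    CKmem d rng (p * q) (ckmul d src rng mul p q x y) := by
  obtain ⟨-, hysum, hylim⟩ := hy
  obtain ⟨M, hM⟩ := hx.exists_bound
  refine ⟨fun c => not_imp_comm.mp fun hc => ckmul_of_ne hc x y,
    fun v hv => (hPS.hasSum_norm_sq_ckmul hp hq hx (hysum v hv)).summable, ?_⟩
  exact squeeze_zero (fun _ => tsum_nonneg fun _ => sq_nonneg _)
    (fun v => hPS.fiberNormSq_ckmul_le hp hq hx hM (hysum v v.2))
    (mul_zero M ▸ hylim.const_mul M)

theorem ckInner_ckmul (hPS : IsProductSystem P d src rng mul) (hp : p ∈ P) (hq : q ∈ P)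
    {x x' y y' : Λ → ℂ} {v : Λ} (hx : IsFiberBounded d rng p x) (hx' : IsFiberBounded d rng p x')
    (hy : Summable fun b : Fiber d rng q v => ‖y b‖ ^ 2)
    (hy' : Summable fun b : Fiber d rng q v => ‖y' b‖ ^ 2) :
    ckInner d rng (p * q) (ckmul d src rng mul p q x y) (ckmul d src rng mul p q x' y') v =
      ckInner d rng q (fun μ => ckInner d rng p x' x (src μ) * y μ) y' v := by
  have hsum : Summable fun c : Fiber d rng (p * q) v =>
      (starRingEnd ℂ) (ckmul d src rng mul p q x y c) * ckmul d src rng mul p q x' y' c := by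
    simpa only [RCLike.inner_apply'] using summable_inner_of_summable_norm_sq (𝕜 := ℂ)
      (hPS.hasSum_norm_sq_ckmul hp hq hx hy).summable
      (hPS.hasSum_norm_sq_ckmul hp hq hx' hy').summable
  rw [← (hPS.fiberMulEquiv hp hq v).summable_iff] at hsum
  calc ckInner d rng (p * q) (ckmul d src rng mul p q x y) (ckmul d src rng mul p q x' y') v
      = ∑' b : Fiber d rng q v, ∑' a : Fiber d rng p (src b),
          (starRingEnd ℂ) (x a * y b) * (x' a * y' b) := by
        rw [ckInner, ← (hPS.fiberMulEquiv hp hq v).tsum_eq]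
        simpa only [Function.comp_apply, hPS.ckmul_fiberMulEquiv] using hsum.tsum_sigma
    _ = ∑' b : Fiber d rng q v,
          (starRingEnd ℂ) (ckInner d rng p x' x (src b) * y b) * y' b := by
        refine tsum_congr fun b => ?_
        rw [ckInner, map_mul, Complex.conj_tsum, mul_assoc, ← tsum_mul_right]
        refine tsum_congr fun a => ?_
        simp only [map_mul, Complex.conj_conj]
        ring

end IsProductSystem

end

theorem stmt18_general (P : Submonoid G)
    (d : Λ → G) (src rng : Λ → Λ) (mul : Λ → Λ → Λ)
    (hPS : IsProductSystem P d src rng mul)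
    (p q : G) (hp : p ∈ P) (hq : q ∈ P) :
    (∀ x y : Λ → ℂ, IsFiberBounded d rng p x → CKmem d rng q y →
      CKmem d rng (p * q) (ckmul d src rng mul p q x y)) ∧
    (∀ x x' y : Λ → ℂ, ckmul d src rng mul p q (x + x') y =
      ckmul d src rng mul p q x y + ckmul d src rng mul p q x' y) ∧
    (∀ x y y' : Λ → ℂ, ckmul d src rng mul p q x (y + y') =
      ckmul d src rng mul p q x y + ckmul d src rng mul p q x y') ∧
    (∀ (c : ℂ) (x y : Λ → ℂ), ckmul d src rng mul p q (c • x) y =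
        c • ckmul d src rng mul p q x y ∧
      ckmul d src rng mul p q x (c • y) = c • ckmul d src rng mul p q x y) ∧
    (∀ r' : G, r' ∈ P → ∀ x y z : Λ → ℂ,
      ckmul d src rng mul (p * q) r' (ckmul d src rng mul p q x y) z =
        ckmul d src rng mul p (q * r') x (ckmul d src rng mul q r' y z)) ∧
    (∀ a b : Λ, d a = p → d b = q →
      ckmul d src rng mul p q
          (fun c => if c = a then (1 : ℂ) else 0)
          (fun c => if c = b then (1 : ℂ) else 0) =
        if rng a = src b then (fun c => if c = mul a b then (1 : ℂ) else 0)
        else 0) ∧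
    (∀ x x' y y' : Λ → ℂ, IsFiberBounded d rng p x → IsFiberBounded d rng p x' → ∀ v,
      (Summable fun b : Fiber d rng q v => ‖y b‖ ^ 2) →
      (Summable fun b : Fiber d rng q v => ‖y' b‖ ^ 2) →
      ckInner d rng (p * q) (ckmul d src rng mul p q x y)
          (ckmul d src rng mul p q x' y') v =
        ckInner d rng q (fun μ => ckInner d rng p x' x (src μ) * y μ) y' v) := by
  have hsingle (e : Λ) : (fun c => if c = e then (1 : ℂ) else 0) = Pi.single e 1 :=
    funext fun c => (Pi.single_apply e 1 c).symm
  refine ⟨fun _ _ hx hy => hPS.ckmem_ckmul hp hq hx hy, add_ckmul, ckmul_add,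
    fun k x y => ⟨smul_ckmul k x y, ckmul_smul k x y⟩,
    fun _ hr x y z => hPS.ckmul_assoc hp hq hr x y z, fun a b ha hb => ?_,
    fun _ _ _ _ hx hx' _ hy hy' => hPS.ckInner_ckmul hp hq hx hx' hy hy'⟩
  simpa only [hsingle, mul_one] using hPS.ckmul_single hp hq ha hb 1 1

/-- Proposition 3.2 / Corollary 3.4: the multiplication on the Cuntz–Krieger bimodules of a
product system of graphs: it maps `X(E_p) × X(E_q)` to `X(E_{pq})`, is bilinear and
associative, acts as expected on point masses, and is compatible with the inner products. -/
theorem stmt18 (P : Submonoid G)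
    (d : Λ → G) (src rng : Λ → Λ) (mul : Λ → Λ → Λ)
    (hPS : IsProductSystem P d src rng mul)
    (p q : G) (hp : p ∈ P) (hq : q ∈ P) :
    (∀ x y : Λ → ℂ, CKmem d rng p x → CKmem d rng q y →
      CKmem d rng (p * q) (ckmul d src rng mul p q x y)) ∧
    (∀ x x' y : Λ → ℂ, ckmul d src rng mul p q (x + x') y =
      ckmul d src rng mul p q x y + ckmul d src rng mul p q x' y) ∧
    (∀ x y y' : Λ → ℂ, ckmul d src rng mul p q x (y + y') =
      ckmul d src rng mul p q x y + ckmul d src rng mul p q x y') ∧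
    (∀ (c : ℂ) (x y : Λ → ℂ), ckmul d src rng mul p q (c • x) y =
        c • ckmul d src rng mul p q x y ∧
      ckmul d src rng mul p q x (c • y) = c • ckmul d src rng mul p q x y) ∧
    (∀ r' : G, r' ∈ P → ∀ x y z : Λ → ℂ,
      ckmul d src rng mul (p * q) r' (ckmul d src rng mul p q x y) z =
        ckmul d src rng mul p (q * r') x (ckmul d src rng mul q r' y z)) ∧
    (∀ a b : Λ, d a = p → d b = q →
      ckmul d src rng mul p q
          (fun c => if c = a then (1 : ℂ) else 0)
          (fun c => if c = b then (1 : ℂ) else 0) =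
        if rng a = src b then (fun c => if c = mul a b then (1 : ℂ) else 0)
        else 0) ∧
    (∀ x x' y y' : Λ → ℂ, CKmem d rng p x → CKmem d rng p x' →
      CKmem d rng q y → CKmem d rng q y' → ∀ v, d v = 1 →
      ckInner d rng (p * q) (ckmul d src rng mul p q x y)
          (ckmul d src rng mul p q x' y') v =
        ckInner d rng q (fun μ => ckInner d rng p x' x (src μ) * y μ) y' v) := by
  obtain ⟨hmem, hadd, hadd', hsmul, hassoc, hsingle, hinner⟩ :=
    stmt18_general P d src rng mul hPS p q hp hq
  exact ⟨fun x y hx => hmem x y hx.isFiberBounded, hadd, hadd', hsmul, hassoc, hsingle,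
    fun x x' y y' hx hx' hy hy' v hv => hinner x x' y y' hx.isFiberBounded hx'.isFiberBounded v
      (hy.2.1 v hv) (hy'.2.1 v hv)⟩

end PSG
end
end

section
/- Let E = (E⁰, E¹, r, s) be a countable directed graph and let X(E) be the associated Banach space of functions on E¹. For y,z ∈ X(E) let Θ_{y,z} : X(E) → X(E) be the bounded linear operator x ↦ y·⟨z,x⟩, i.e. (Θ_{y,z} x)(λ) = y(λ) ∑_{μ∈E¹, r(μ)=r(λ)} conj(z(μ)) x(μ). If S : X(E) → X(E) is a bounded linear operator lying in the operator-norm closure of the linear span of {Θ_{y,z} : y,z ∈ X(E)}, then the function λ ↦ ‖S(δ_λ)‖ vanishes at infinity on E¹ (tends to 0 along the cofinite filter on E¹). -/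
open scoped Classical

noncomputable section

namespace PSG

/-- Membership in the Cuntz–Krieger module `X(E)` of a single graph. -/
def memX {V E : Type*} (r : E → V) (x : E → ℂ) : Prop :=
  (∀ v : V, Summable fun l : {l : E // r l = v} => ‖x l.1‖ ^ 2) ∧
  Filter.Tendsto (fun v : V => ∑' l : {l : E // r l = v}, ‖x l.1‖ ^ 2)
    Filter.cofinite (nhds 0)

/-- The norm on `X(E)`: `‖x‖ = sup_v (∑_{r(λ)=v} |x(λ)|²)^{1/2}`. -/
def Xnorm {V E : Type*} (r : E → V) (x : E → ℂ) : ℝ :=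
  ⨆ v : V, Real.sqrt (∑' l : {l : E // r l = v}, ‖x l.1‖ ^ 2)

/-- The rank-one operator `Θ_{y,z} : x ↦ y ⋅ ⟨z, x⟩` on `X(E)`. -/
def theta {V E : Type*} (r : E → V) (y z x : E → ℂ) : E → ℂ :=
  fun l => y l * ∑' m : {m : E // r m = r l}, (starRingEnd ℂ) (z m.1) * x m.1

/-!
On point masses, `Θ_{y,z} δ_l` is `conj (z l)` times the restriction of `y` to the edges with the
same range as `l`, so `‖Θ_{y,z} δ_l‖ ≤ |z l| ‖y‖`. This tends to `0` because `z` vanishes at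
infinity on the edges: `ρ_z` is small off a finite set of vertices, and over each vertex of that
set `z` is square summable. The conclusion passes to linear combinations, and from there to
operator-norm limits since `‖δ_l‖ ≤ 1` uniformly in `l`.
-/

section Lp

open Filter Topology

variable {ι : Type*} {F : ι → Type*} [∀ i, NormedAddCommGroup (F i)]

lemma memℓp_two_iff_summable_norm_sq {f : ∀ i, F i} :
    Memℓp f 2 ↔ Summable fun i ↦ ‖f i‖ ^ 2 := by
  simpa using memℓp_gen_iff (p := 2) (by simp) (f := f)

lemma norm_lp_two_eq_sqrt_tsum (f : lp F 2) : ‖f‖ = √(∑' i, ‖f i‖ ^ 2) := by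
  simpa [Real.sqrt_eq_rpow] using lp.norm_eq_tsum_rpow (p := 2) (by simp) f

lemma tendsto_norm_cofinite_of_memℓp {p : ENNReal} (hp : 0 < p.toReal) {f : ∀ i, F i}
    (hf : Memℓp f p) : Tendsto (fun i ↦ ‖f i‖) cofinite (𝓝 0) := by
  have hroot : Tendsto (fun i ↦ (‖f i‖ ^ p.toReal) ^ p.toReal⁻¹) cofinite (𝓝 0) := by
    simpa [Real.zero_rpow (inv_pos.2 hp).ne'] using
      (hf.summable hp).tendsto_cofinite_zero.rpow_const (.inr (inv_pos.2 hp).le)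
  simpa only [Real.rpow_rpow_inv (norm_nonneg _) hp.ne'] using hroot

end Lp

section CuntzKriegerModule

open Filter Topology

variable {V E : Type*} {r : E → V} {x y z : E → ℂ} {v : V}

/-- The restriction of a function on the edges to the fiber of edges with range `v`. -/
def fiber (r : E → V) (x : E → ℂ) (v : V) : {l : E // r l = v} → ℂ := fun l ↦ x l

/-- The `ℓ²`-norm of the restriction of `x` to the edges with range `v`, that is,
`ρ_x(v)^{1/2}`; it is the junk value `0` if this restriction is not square summable. -/
def fiberNorm (r : E → V) (x : E → ℂ) (v : V) : ℝ :=
  √(∑' l, ‖fiber r x v l‖ ^ 2)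

lemma fiberNorm_nonneg (r : E → V) (x : E → ℂ) (v : V) : 0 ≤ fiberNorm r x v :=
  Real.sqrt_nonneg _

lemma fiberNorm_eq_norm (hx : Memℓp (fiber r x v) 2) :
    fiberNorm r x v = ‖(⟨fiber r x v, hx⟩ : lp (fun _ : {l : E // r l = v} ↦ ℂ) 2)‖ :=
  (norm_lp_two_eq_sqrt_tsum ⟨fiber r x v, hx⟩).symm

lemma norm_le_fiberNorm {l : E} (hx : Memℓp (fiber r x (r l)) 2) :
    ‖x l‖ ≤ fiberNorm r x (r l) := by
  rw [fiberNorm_eq_norm hx]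
  exact lp.norm_apply_le_norm two_ne_zero ⟨fiber r x (r l), hx⟩ ⟨l, rfl⟩

lemma fiberNorm_mono (hy : Memℓp (fiber r y v) 2) (hxy : ∀ l, ‖x l‖ ≤ ‖y l‖) :
    fiberNorm r x v ≤ fiberNorm r y v := by
  have hx : Memℓp (fiber r x v) 2 := hy.mono' fun l ↦ hxy l
  rw [fiberNorm_eq_norm hx, fiberNorm_eq_norm hy]
  exact lp.norm_mono two_ne_zero fun l ↦ hxy l

lemma fiberNorm_add_le (hx : Memℓp (fiber r x v) 2) (hy : Memℓp (fiber r y v) 2) :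
    fiberNorm r (x + y) v ≤ fiberNorm r x v + fiberNorm r y v := by
  have hxy : Memℓp (fiber r (x + y) v) 2 := hx.add hy
  rw [fiberNorm_eq_norm hx, fiberNorm_eq_norm hy, fiberNorm_eq_norm hxy]
  exact norm_add_le (⟨fiber r x v, hx⟩ : lp (fun _ : {l : E // r l = v} ↦ ℂ) 2)
    ⟨fiber r y v, hy⟩

lemma fiberNorm_smul (r : E → V) (c : ℂ) (x : E → ℂ) (v : V) :
    fiberNorm r (c • x) v = ‖c‖ * fiberNorm r x v := by
  simp only [fiberNorm, fiber, Pi.smul_apply, norm_smul, mul_pow, tsum_mul_left]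
  rw [Real.sqrt_mul (sq_nonneg ‖c‖), Real.sqrt_sq (norm_nonneg c)]

lemma fiberNorm_single (r : E → V) (l : E) (a : ℂ) :
    fiberNorm r (Pi.single l a) = Pi.single (r l) ‖a‖ := by
  ext v
  by_cases hv : r l = v
  · subst hv
    rw [fiberNorm, tsum_eq_single ⟨l, rfl⟩ fun m hm ↦ by
      simp [fiber, Pi.single_eq_of_ne fun h ↦ hm (Subtype.ext h)]]
    simp [fiber]
  · have hne (m : {m : E // r m = v}) : m.1 ≠ l := fun h ↦ hv (h ▸ m.2)
    simp [fiberNorm, fiber, hne, Ne.symm hv]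

lemma memX_iff :
    memX r x ↔ (∀ v, Memℓp (fiber r x v) 2) ∧ Tendsto (fiberNorm r x) cofinite (𝓝 0) := by
  have hsq (v : V) : fiberNorm r x v ^ 2 = ∑' l : {l : E // r l = v}, ‖x l.1‖ ^ 2 :=
    Real.sq_sqrt (tsum_nonneg fun _ ↦ sq_nonneg _)
  simp only [memX, memℓp_two_iff_summable_norm_sq]
  refine and_congr Iff.rfl ⟨fun h ↦ ?_, fun h ↦ ?_⟩
  · exact Real.sqrt_zero ▸ h.sqrt
  · simpa [hsq] using h.pow 2

lemma memX.memℓp_fiber (hx : memX r x) (v : V) : Memℓp (fiber r x v) 2 :=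
  (memX_iff.1 hx).1 v

lemma memX.tendsto_fiberNorm (hx : memX r x) : Tendsto (fiberNorm r x) cofinite (𝓝 0) :=
  (memX_iff.1 hx).2

lemma memX.mono (hy : memX r y) (hxy : ∀ l, ‖x l‖ ≤ ‖y l‖) : memX r x :=
  memX_iff.2 ⟨fun v ↦ (hy.memℓp_fiber v).mono' fun l ↦ hxy l,
    squeeze_zero (fiberNorm_nonneg r x) (fun v ↦ fiberNorm_mono (hy.memℓp_fiber v) hxy)
      hy.tendsto_fiberNorm⟩

lemma memX_single (r : E → V) (l : E) (a : ℂ) : memX r (Pi.single l a) := by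
  refine memX_iff.2 ⟨fun v ↦ ?_, ?_⟩
  · refine memℓp_two_iff_summable_norm_sq.2 (summable_of_hasFiniteSupport ?_)
    refine ((Set.finite_singleton l).preimage Subtype.val_injective.injOn).subset fun m hm ↦ ?_
    by_contra hml
    exact hm (by simp [fiber, Pi.single_eq_of_ne hml])
  · rw [fiberNorm_single]
    refine tendsto_nhds_of_eventually_eq ?_
    filter_upwards [eventually_cofinite_ne (r l)] with v hv using Pi.single_eq_of_ne hv _

/-- The module `X(E)` as a subspace of the space of all functions on the edges. -/
def cuntzKriegerModule (r : E → V) : Submodule ℂ (E → ℂ) where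
  carrier := {x | memX r x}
  zero_mem' := by simp [memX, summable_zero, tendsto_const_nhds]
  add_mem' {x y} hx hy := by
    refine memX_iff.2 ⟨fun v ↦ (hx.memℓp_fiber v).add (hy.memℓp_fiber v), ?_⟩
    exact squeeze_zero (fiberNorm_nonneg r _)
      (fun v ↦ fiberNorm_add_le (hx.memℓp_fiber v) (hy.memℓp_fiber v))
      (by simpa using hx.tendsto_fiberNorm.add hy.tendsto_fiberNorm)
  smul_mem' c x hx := by
    refine memX_iff.2 ⟨fun v ↦ (hx.memℓp_fiber v).const_smul c, ?_⟩
    simpa [funext (fiberNorm_smul r c x)] using hx.tendsto_fiberNorm.const_mul ‖c‖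

lemma memX.tendsto_norm_cofinite (hx : memX r x) :
    Tendsto (fun l ↦ ‖x l‖) cofinite (𝓝 0) := by
  refine tendsto_order.2
    ⟨fun a ha ↦ .of_forall fun l ↦ ha.trans_le (norm_nonneg _), fun ε hε ↦ ?_⟩
  refine eventually_cofinite.2 (Set.Finite.of_finite_fibers r ?_ fun v _ ↦ ?_)
  · refine (eventually_cofinite.1 (hx.tendsto_fiberNorm.eventually_lt_const hε)).subset ?_
    rintro _ ⟨l, hl, rfl⟩
    exact not_lt.2 ((not_lt.1 hl).trans (norm_le_fiberNorm (hx.memℓp_fiber (r l))))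
  · have hfiber := tendsto_norm_cofinite_of_memℓp (p := 2) (by simp) (hx.memℓp_fiber v)
    refine ((eventually_cofinite.1 (hfiber.eventually_lt_const hε)).image Subtype.val).subset ?_
    exact fun l ⟨hl, hlv⟩ ↦ ⟨⟨l, hlv⟩, hl, rfl⟩

lemma Xnorm_eq_iSup_fiberNorm (r : E → V) (x : E → ℂ) : Xnorm r x = ⨆ v, fiberNorm r x v := rfl

lemma Xnorm_nonneg (r : E → V) (x : E → ℂ) : 0 ≤ Xnorm r x :=
  Real.iSup_nonneg (fiberNorm_nonneg r x)

lemma memX.fiberNorm_le_Xnorm (hx : memX r x) (v : V) : fiberNorm r x v ≤ Xnorm r x :=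
  le_ciSup hx.tendsto_fiberNorm.bddAbove_range_of_cofinite v

lemma Xnorm_mono (hy : memX r y) (hxy : ∀ l, ‖x l‖ ≤ ‖y l‖) : Xnorm r x ≤ Xnorm r y :=
  Real.iSup_le (fun v ↦ (fiberNorm_mono (hy.memℓp_fiber v) hxy).trans (hy.fiberNorm_le_Xnorm v))
    (Xnorm_nonneg r y)

lemma Xnorm_add_le (hx : memX r x) (hy : memX r y) :
    Xnorm r (x + y) ≤ Xnorm r x + Xnorm r y :=
  Real.iSup_le (fun v ↦ (fiberNorm_add_le (hx.memℓp_fiber v) (hy.memℓp_fiber v)).trans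
      (add_le_add (hx.fiberNorm_le_Xnorm v) (hy.fiberNorm_le_Xnorm v)))
    (add_nonneg (Xnorm_nonneg r x) (Xnorm_nonneg r y))

lemma Xnorm_smul (r : E → V) (c : ℂ) (x : E → ℂ) : Xnorm r (c • x) = ‖c‖ * Xnorm r x := by
  simp only [Xnorm_eq_iSup_fiberNorm, fiberNorm_smul, Real.mul_iSup_of_nonneg (norm_nonneg c)]

lemma Xnorm_sum_le {ι : Type*} (s : Finset ι) {f : ι → E → ℂ} (hf : ∀ i ∈ s, memX r (f i)) :
    Xnorm r (∑ i ∈ s, f i) ≤ ∑ i ∈ s, Xnorm r (f i) :=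
  Finset.le_sum_of_subadditive_on_pred (Xnorm r) (memX r) (by simp [Xnorm])
    (fun _ _ ↦ Xnorm_add_le) (fun _ _ ↦ (cuntzKriegerModule r).add_mem) f hf

lemma Xnorm_single_le (r : E → V) (l : E) (a : ℂ) : Xnorm r (Pi.single l a) ≤ ‖a‖ := by
  rw [Xnorm_eq_iSup_fiberNorm, fiberNorm_single]
  refine Real.iSup_le (fun v ↦ ?_) (norm_nonneg a)
  obtain rfl | hv := eq_or_ne v (r l)
  · simp
  · simp [hv]

lemma theta_single (r : E → V) (y z : E → ℂ) (l : E) (a : ℂ) :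
    theta r y z (Pi.single l a) =
      ((starRingEnd ℂ) (z l) * a) • (r ⁻¹' {r l}).indicator y := by
  ext m
  by_cases hm : r m = r l
  · rw [theta, tsum_eq_single ⟨l, hm.symm⟩ fun b hb ↦ by
      simp [Pi.single_eq_of_ne fun h ↦ hb (Subtype.ext h)]]
    simp [hm, mul_comm]
  · have hne (b : {b : E // r b = r m}) : b.1 ≠ l := fun h ↦ hm (h ▸ b.2).symm
    simp [theta, hne, hm]

lemma memX_theta_single (hy : memX r y) (z : E → ℂ) (l : E) (a : ℂ) :
    memX r (theta r y z (Pi.single l a)) := by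
  rw [theta_single]
  exact (cuntzKriegerModule r).smul_mem _ (hy.mono fun _ ↦ norm_indicator_le_norm_self _ _)

lemma Xnorm_theta_single_le (hy : memX r y) (z : E → ℂ) (l : E) (a : ℂ) :
    Xnorm r (theta r y z (Pi.single l a)) ≤ ‖z l‖ * ‖a‖ * Xnorm r y := by
  rw [theta_single, Xnorm_smul, norm_mul, RCLike.norm_conj]
  gcongr
  exact Xnorm_mono hy fun _ ↦ norm_indicator_le_norm_self _ _

lemma tendsto_Xnorm_theta_single (hy : memX r y) (hz : memX r z) (a : ℂ) :
    Tendsto (fun l ↦ Xnorm r (theta r y z (Pi.single l a))) cofinite (𝓝 0) :=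
  squeeze_zero (fun _ ↦ Xnorm_nonneg r _) (fun l ↦ Xnorm_theta_single_le hy z l a) <| by
    simpa using (hz.tendsto_norm_cofinite.mul_const ‖a‖).mul_const (Xnorm r y)

lemma tendsto_Xnorm_sum_smul_theta_single {ι : Type*} (s : Finset ι) (c : ι → ℂ)
    {y z : ι → E → ℂ} (hyz : ∀ i ∈ s, memX r (y i) ∧ memX r (z i)) (a : ℂ) :
    Tendsto (fun l ↦ Xnorm r (∑ i ∈ s, c i • theta r (y i) (z i) (Pi.single l a)))
      cofinite (𝓝 0) := by
  have hmem (l : E) : ∀ i ∈ s, memX r (c i • theta r (y i) (z i) (Pi.single l a)) :=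
    fun i hi ↦ (cuntzKriegerModule r).smul_mem _ (memX_theta_single (hyz i hi).1 _ l a)
  refine squeeze_zero (fun _ ↦ Xnorm_nonneg r _) (fun l ↦ Xnorm_sum_le s (hmem l)) ?_
  simp only [Xnorm_smul]
  simpa using tendsto_finsetSum s fun i hi ↦
    (tendsto_Xnorm_theta_single (hyz i hi).1 (hyz i hi).2 a).const_mul ‖c i‖

theorem stmt19_general (r : E → V) (S : (E → ℂ) → (E → ℂ))
    (hmaps : ∀ x, memX r x → memX r (S x))
    (happrox : ∀ ε : ℝ, 0 < ε →
      ∃ (n : ℕ) (c : Fin n → ℂ) (y z : Fin n → E → ℂ),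
        (∀ i, memX r (y i) ∧ memX r (z i)) ∧
        ∀ x, memX r x →
          Xnorm r (S x - ∑ i, c i • theta r (y i) (z i) x) ≤ ε * Xnorm r x) :
    Tendsto (fun l : E ↦ Xnorm r (S (Pi.single l 1))) cofinite (𝓝 0) := by
  refine tendsto_order.2
    ⟨fun a ha ↦ .of_forall fun l ↦ ha.trans_le (Xnorm_nonneg r _), fun ε hε ↦ ?_⟩
  obtain ⟨n, c, y, z, hyz, hST⟩ := happrox (ε / 2) (half_pos hε)
  have hT := tendsto_Xnorm_sum_smul_theta_single Finset.univ c (fun i _ ↦ hyz i) 1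
  filter_upwards [hT.eventually_lt_const (half_pos hε)] with l hTδ
  set δ : E → ℂ := Pi.single l 1
  set Tδ : E → ℂ := ∑ i, c i • theta r (y i) (z i) δ
  have hδ : memX r δ := memX_single r l 1
  have hTδ_mem : memX r Tδ := (cuntzKriegerModule r).sum_mem fun i _ ↦
    (cuntzKriegerModule r).smul_mem _ (memX_theta_single (hyz i).1 _ l 1)
  have hdiff_mem : memX r (S δ - Tδ) := (cuntzKriegerModule r).sub_mem (hmaps δ hδ) hTδ_mem
  have hdiff : Xnorm r (S δ - Tδ) ≤ ε / 2 := (hST δ hδ).trans <|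
    mul_le_of_le_one_right (half_pos hε).le (by simpa using Xnorm_single_le r l 1)
  calc Xnorm r (S δ) = Xnorm r ((S δ - Tδ) + Tδ) := by rw [sub_add_cancel]
    _ ≤ Xnorm r (S δ - Tδ) + Xnorm r Tδ := Xnorm_add_le hdiff_mem hTδ_mem
    _ < ε / 2 + ε / 2 := add_lt_add_of_le_of_lt hdiff hTδ
    _ = ε := add_halves ε

end CuntzKriegerModule

/-- Lemma 5.1: if a bounded operator `S` on `X(E)` is an operator-norm limit of finite linear
combinations of rank-one operators `Θ_{y,z}` (i.e. `S` is a "compact" operator on `X(E)`),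
then `λ ↦ ‖S(δ_λ)‖` vanishes at infinity on `E¹`. -/
theorem stmt19 {V E : Type*} [Countable V] [Countable E] (r s : E → V)
    (S : (E → ℂ) → (E → ℂ))
    (hmaps : ∀ x, memX r x → memX r (S x))
    (hadd : ∀ x y, memX r x → memX r y → S (x + y) = S x + S y)
    (hsmul : ∀ (c : ℂ) (x), memX r x → S (c • x) = c • S x)
    (happrox : ∀ ε : ℝ, 0 < ε →
      ∃ (n : ℕ) (c : Fin n → ℂ) (y z : Fin n → E → ℂ),
        (∀ i, memX r (y i) ∧ memX r (z i)) ∧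
        ∀ x, memX r x →
          Xnorm r (S x - ∑ i, c i • theta r (y i) (z i) x) ≤ ε * Xnorm r x) :
    Filter.Tendsto
      (fun l : E => Xnorm r (S fun m => if m = l then (1 : ℂ) else 0))
      Filter.cofinite (nhds 0) := by
  simpa only [fun l : E ↦ funext (Pi.single_apply l (1 : ℂ))] using stmt19_general r S hmaps happrox

end PSG
end
end
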